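/- Let $\{z_k\}$ be a separated sequence in $\mathbb{B}_n$ (i.e., there exists $\delta > 0$ with $\beta(z_i, z_j) > \delta$ for $i \ne j$, where $\beta$ is the Bergman metric), and let $n < t < s$. Then there is a constant $C > 0$ such that for all $z \in \mathbb{B}_n$, $\sum_{k=1}^\infty \frac{(1-|z_k|^2)^t}{|1 - \langle z, z_k\rangle|^s} \le C (1-|z|^2)^{t-s}$. -/

import Mathlib

open MeasureTheory

noncomputable section

abbrev Cn (n : ℕ) := EuclideanSpace ℂ (Fin n)


noncomputable instance (n : ℕ) : MeasurableSpace (Cn n) := borel _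
instance (n : ℕ) : BorelSpace (Cn n) := ⟨rfl⟩
noncomputable instance (n : ℕ) : MeasureSpace (Cn n) := ⟨MeasureTheory.Measure.addHaar⟩

def B (n : ℕ) : Set (Cn n) := Metric.ball 0 1

def bdot {n : ℕ} (z w : Cn n) : ℂ := ∑ j, z j * (starRingEnd ℂ) (w j)

def vol (n : ℕ) (α : ℝ) : Measure (Cn n) :=
  (volume.restrict (B n)).withDensity fun z => ENNReal.ofReal ((1 - ‖z‖ ^ 2) ^ α)

def Hol {n : ℕ} (f : Cn n → ℂ) : Prop := DifferentiableOn ℂ f (B n)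

def bNorm (n : ℕ) (p α : ℝ) (f : Cn n → ℂ) : ℝ :=
  (∫ z, ‖f z‖ ^ p ∂(vol n α)) ^ (1 / p)

def InBergman (n : ℕ) (p α : ℝ) (f : Cn n → ℂ) : Prop :=
  Hol f ∧ Integrable (fun z => ‖f z‖ ^ p) (vol n α)

def rderiv {n : ℕ} (f : Cn n → ℂ) (z : Cn n) : ℂ := fderiv ℂ f z z

def mob {n : ℕ} (a z : Cn n) : ℝ :=
  (1 - ‖a‖ ^ 2) * (1 - ‖z‖ ^ 2) / ‖(1 : ℂ) - bdot z a‖ ^ 2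

def rho {n : ℕ} (z w : Cn n) : ℝ := Real.sqrt (1 - mob z w)

def bergDist {n : ℕ} (z w : Cn n) : ℝ :=
  (1 / 2) * Real.log ((1 + rho z w) / (1 - rho z w))

def bergBall {n : ℕ} (a : Cn n) (r : ℝ) : Set (Cn n) := {w ∈ B n | bergDist a w < r}

def IsCarleson (n : ℕ) (lam γ : ℝ) (μ : Measure (Cn n)) : Prop :=
  ∀ p q : ℝ, 0 < p → 0 < q → q / p = lam →
    ∃ C > 0, ∀ f : Cn n → ℂ, InBergman n p γ f →
      ∫ z, ‖f z‖ ^ q ∂μ ≤ C * bNorm n p γ f ^ q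

def blochSet (n : ℕ) (α : ℝ) (f : Cn n → ℂ) : Set ℝ :=
  {x | ∃ z ∈ B n, x = ‖rderiv f z‖ * (1 - ‖z‖ ^ 2) ^ α}

def blochNorm (n : ℕ) (α : ℝ) (f : Cn n → ℂ) : ℝ := sSup (blochSet n α f)

def InBloch (n : ℕ) (α : ℝ) (f : Cn n → ℂ) : Prop :=
  Hol f ∧ BddAbove (blochSet n α f)

def Fint (n : ℕ) (p q s : ℝ) (f : Cn n → ℂ) (a : Cn n) : ℝ :=
  ∫ z in B n, ‖rderiv f z‖ ^ p * (1 - ‖z‖ ^ 2) ^ q * mob a z ^ s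

def FSet (n : ℕ) (p q s : ℝ) (f : Cn n → ℂ) : Set ℝ :=
  {x | ∃ a ∈ B n, x = Fint n p q s f a}

def FNorm (n : ℕ) (p q s : ℝ) (f : Cn n → ℂ) : ℝ := sSup (FSet n p q s f) ^ (1 / p)

def InF (n : ℕ) (p q s : ℝ) (f : Cn n → ℂ) : Prop :=
  Hol f ∧ BddAbove (FSet n p q s f)

def toeplitz (n : ℕ) (β : ℝ) (μ : Measure (Cn n)) (f : Cn n → ℂ) (z : Cn n) : ℂ :=
  ∫ w, f w / ((1 : ℂ) - bdot z w) ^ ((((n : ℝ) + 1 + β : ℝ)) : ℂ) ∂μ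

def carlSet (n : ℕ) (p q γ : ℝ) (μ : Measure (Cn n)) : Set ℝ :=
  {x | ∃ f : Cn n → ℂ, InBergman n p γ f ∧ bNorm n p γ f ≤ 1 ∧ x = ∫ z, ‖f z‖ ^ q ∂μ}

/-!
For `a` in the ball, the translate by `a` of the image of a small Euclidean ball under the
linearization `-dφ_a(0)` is an ellipsoid of volume comparable to `(1 - ‖a‖²)^(n + 1)`, on which
`1 - ‖x‖²` is comparable to `1 - ‖a‖²`. For a separated family `w` these ellipsoids are disjoint,
so `∑ (1 - ‖w i‖²)^t` is at most a constant times `∫ (1 - ‖x‖²)^(t - n - 1)`, which is finite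
because `n < t`; the bound depends only on the separation, hence is Möbius invariant.

Fix `z` and `R`. The involution `φ_a` with `a = (1 - R) z` (or `a = 0` when `1 ≤ R`) blows up the
tent `{w | ‖1 - ⟪z, w⟫‖ ≤ R}`: there `1 - ‖w‖² ≤ 4 R (1 - ‖φ_a w‖²)`. The previous bound, applied
to `φ_a ∘ w`, shows that the terms with `R / 2 ≤ ‖1 - ⟪z, w i⟫‖ ≤ R` add up to at most a constant
times `R^(t - s)`. Summing over `R = 2^l (1 - ‖z‖²)` is a geometric series because `t < s`.
-/

open scoped InnerProductSpace

section AddHaar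

variable {E : Type*} [NormedAddCommGroup E] [MeasurableSpace E] [BorelSpace E]

theorem addHaar_real_image_complexLinearMap [NormedSpace ℂ E] [FiniteDimensional ℂ E]
    (μ : Measure E) [μ.IsAddHaarMeasure] (f : E →ₗ[ℂ] E) (s : Set E) :
    μ.real (f '' s) = ‖LinearMap.det f‖ ^ 2 * μ.real s := by
  have hdet : LinearMap.det (f.restrictScalars ℝ) = ‖LinearMap.det f‖ ^ 2 := by
    rw [LinearMap.det_restrictScalars, Algebra.norm_complex_apply, Complex.normSq_eq_norm_sq]
  have himage := Measure.addHaar_image_linearMap μ (f.restrictScalars ℝ) s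
  rw [hdet, abs_sq] at himage
  rw [measureReal_def, ← LinearMap.coe_restrictScalars ℝ f, himage, ENNReal.toReal_mul,
    ENNReal.toReal_ofReal (sq_nonneg _), measureReal_def]

theorem integrableOn_one_sub_norm_sq_rpow [NormedSpace ℝ E] [FiniteDimensional ℝ E]
    (μ : Measure E) [μ.IsAddHaarMeasure] {p : ℝ} (hp : -1 < p) :
    IntegrableOn (fun x : E => (1 - ‖x‖ ^ 2) ^ p) (Metric.ball 0 1) μ := by
  have hball : μ (Metric.ball (0 : E) 1) ≠ ⊤ := measure_ball_lt_top.ne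
  rcases subsingleton_or_nontrivial E with hE | hE
  · refine (integrableOn_const hball (C := (1 : ℝ))).congr_fun (fun x _ => ?_) measurableSet_ball
    simp [Subsingleton.elim x 0]
  have hsing : IntegrableOn (fun y : ℝ => (1 - y) ^ p) (Set.Icc 0 1) := by
    have := (intervalIntegral.intervalIntegrable_rpow' (a := 0) (b := 1) hp).comp_sub_left 1
    rw [sub_zero, sub_self] at this
    exact (intervalIntegrable_iff_integrableOn_Icc_of_le zero_le_one).1 this.symm
  have hcont : ContinuousOn (fun y : ℝ => y ^ (Module.finrank ℝ E - 1) * (1 + y) ^ p)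
      (Set.Icc 0 1) := by
    refine (by fun_prop : Continuous _).continuousOn.mul
      (ContinuousOn.rpow_const (by fun_prop) fun y hy => Or.inl ?_)
    linarith [hy.1]
  refine (integrableOn_fun_norm_addHaar μ (f := fun y => (1 - y ^ 2) ^ p)).2 <|
    ((hsing.continuousOn_mul hcont isCompact_Icc).mono_set Set.Ioo_subset_Icc_self).congr_fun
      (fun y hy => ?_) measurableSet_Ioo
  have hfactor : 1 - y ^ 2 = (1 + y) * (1 - y) := by ring
  dsimp only
  rw [smul_eq_mul, hfactor, Real.mul_rpow (by linarith [hy.1]) (by linarith [hy.2]), mul_assoc]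

end AddHaar

theorem sum_mul_measureReal_le_setIntegral {α ι : Type*} [MeasurableSpace α] {μ : Measure α}
    {f : α → ℝ} {S : Set α} {U : ι → Set α} {c : ι → ℝ} (F : Finset ι) (hS : MeasurableSet S)
    (hf : IntegrableOn f S μ) (hf_nonneg : ∀ x ∈ S, 0 ≤ f x) (hU : ∀ i ∈ F, MeasurableSet (U i))
    (hU_top : ∀ i ∈ F, μ (U i) ≠ ⊤) (hUS : ∀ i ∈ F, U i ⊆ S)
    (hdisj : (F : Set ι).PairwiseDisjoint U) (hc : ∀ i ∈ F, ∀ x ∈ U i, c i ≤ f x) :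
    ∑ i ∈ F, c i * μ.real (U i) ≤ ∫ x in S, f x ∂μ :=
  calc ∑ i ∈ F, c i * μ.real (U i)
      ≤ ∑ i ∈ F, ∫ x in U i, f x ∂μ := Finset.sum_le_sum fun i hi =>
        setIntegral_ge_of_const_le_real (hU i hi) (hU_top i hi) (hc i hi) (hf.mono_set (hUS i hi))
    _ = ∫ x in ⋃ i ∈ F, U i, f x ∂μ :=
        (integral_biUnion_finset F hU hdisj fun i hi => hf.mono_set (hUS i hi)).symm
    _ ≤ ∫ x in S, f x ∂μ :=
        setIntegral_mono_set hf (ae_restrict_of_forall_mem hS hf_nonneg)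
          (Set.iUnion₂_subset hUS).eventuallyLE

theorem rpow_neg_abs_le_rpow {b x : ℝ} (hb : 0 < b) (hx : x ∈ Set.Icc b⁻¹ b) (p : ℝ) :
    b ^ (-|p|) ≤ x ^ p := by
  have hb_inv : 0 < b⁻¹ := inv_pos.2 hb
  rcases le_total 0 p with hp | hp
  · rw [abs_of_nonneg hp, Real.rpow_neg hb.le, ← Real.inv_rpow hb.le]
    exact Real.rpow_le_rpow hb_inv.le hx.1 hp
  · rw [abs_of_nonpos hp, neg_neg]
    exact Real.rpow_le_rpow_of_nonpos (hb_inv.trans_le hx.1) hx.2 hp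

theorem sum_le_of_fiber_le_geometric {ι : Type*} (F : Finset ι) (f : ι → ℝ) (j : ι → ℕ)
    {K q : ℝ} (hK : 0 ≤ K) (hq0 : 0 ≤ q) (hq1 : q < 1)
    (hf : ∀ m, ∑ k ∈ F with j k = m, f k ≤ K * q ^ m) :
    ∑ k ∈ F, f k ≤ K * (1 - q)⁻¹ := by
  classical
  rw [← Finset.sum_fiberwise_of_maps_to (g := j) (t := F.image j)
    (fun k hk => Finset.mem_image_of_mem j hk)]
  calc _ ≤ ∑ m ∈ F.image j, K * q ^ m := Finset.sum_le_sum fun m _ => hf m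
    _ = K * ∑ m ∈ F.image j, q ^ m := by rw [Finset.mul_sum]
    _ ≤ K * (1 - q)⁻¹ := by
      gcongr
      rw [← tsum_geometric_of_lt_one hq0 hq1]
      exact (summable_geometric_of_lt_one hq0 hq1).sum_le_tsum _ fun m _ => by positivity

theorem one_add_ofReal_sqrt_ne_zero (x : ℝ) : (1 + √x : ℂ) ≠ 0 := by
  have hpos : 0 < 1 + √x := by positivity
  exact_mod_cast hpos.ne'

section UnitBall

variable {E : Type*} [NormedAddCommGroup E]

theorem one_sub_norm_sq_pos {z : E} (hz : ‖z‖ < 1) : 0 < 1 - ‖z‖ ^ 2 :=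
  sub_pos.2 <| pow_lt_one₀ (norm_nonneg z) hz two_ne_zero

theorem one_sub_norm_sq_nonneg {a : E} (ha : ‖a‖ ≤ 1) : 0 ≤ 1 - ‖a‖ ^ 2 :=
  sub_nonneg.2 <| pow_le_one₀ (norm_nonneg a) ha

theorem norm_one_sub_ofReal_norm_sq {a : E} (ha : ‖a‖ ≤ 1) :
    ‖1 - (‖a‖ : ℂ) ^ 2‖ = 1 - ‖a‖ ^ 2 := by
  rw [← Real.norm_of_nonneg (one_sub_norm_sq_nonneg ha), ← Complex.norm_real]
  push_cast
  rfl

theorem ofReal_sqrt_one_sub_norm_sq_sq {a : E} (ha : ‖a‖ ≤ 1) :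
    (√(1 - ‖a‖ ^ 2) : ℂ) ^ 2 = 1 - (‖a‖ : ℂ) ^ 2 := by
  exact_mod_cast congrArg ((↑) : ℝ → ℂ) (Real.sq_sqrt (one_sub_norm_sq_nonneg ha))

variable [InnerProductSpace ℂ E] {a z w : E}

theorem norm_one_sub_inner_comm (z w : E) : ‖1 - ⟪z, w⟫_ℂ‖ = ‖1 - ⟪w, z⟫_ℂ‖ := by
  rw [← RCLike.norm_conj, map_sub, map_one, inner_conj_symm]

theorem half_one_sub_norm_sq_le_norm_one_sub_inner (hz : ‖z‖ ≤ 1) (hw : ‖w‖ ≤ 1) :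
    (1 - ‖z‖ ^ 2) / 2 ≤ ‖1 - ⟪z, w⟫_ℂ‖ := by
  have hinner : ‖⟪z, w⟫_ℂ‖ ≤ ‖z‖ :=
    (norm_inner_le_norm z w).trans (mul_le_of_le_one_right (norm_nonneg z) hw)
  have htriangle := norm_sub_norm_le (1 : ℂ) ⟪z, w⟫_ℂ
  rw [norm_one] at htriangle
  nlinarith [norm_nonneg z]

theorem norm_one_sub_inner_pos (hz : ‖z‖ < 1) (hw : ‖w‖ ≤ 1) : 0 < ‖1 - ⟪z, w⟫_ℂ‖ :=
  (half_pos (one_sub_norm_sq_pos hz)).trans_le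
    (half_one_sub_norm_sq_le_norm_one_sub_inner hz.le hw)

/-- The Möbius involution `φ_a` of the unit ball interchanging `0` and `a`. With
`s = √(1 - ‖a‖²)`, `P` the orthogonal projection onto `ℂ a` and `Q = 1 - P`, it is
`φ_a z = (a - P z - s Q z) / (1 - ⟪a, z⟫)`; here `P + s Q` is rewritten as
`s + ⟪a, ·⟫ a / (1 + s)`, which avoids dividing by `‖a‖`. -/
def ballInvolution (a z : E) : E :=
  (1 - ⟪a, z⟫_ℂ)⁻¹ • ((1 - ⟪a, z⟫_ℂ / (1 + √(1 - ‖a‖ ^ 2))) • a - (√(1 - ‖a‖ ^ 2) : ℂ) • z)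

theorem inner_self_eq_one_sub_ofReal_sqrt_sq (ha : ‖a‖ ≤ 1) :
    ⟪a, a⟫_ℂ = 1 - (√(1 - ‖a‖ ^ 2) : ℂ) ^ 2 := by
  rw [ofReal_sqrt_one_sub_norm_sq_sq ha, sub_sub_cancel]
  exact inner_self_eq_norm_sq_to_K a

theorem one_sub_inner_ballInvolution (ha : ‖a‖ ≤ 1) (hz : 1 - ⟪z, a⟫_ℂ ≠ 0)
    (hw : 1 - ⟪a, w⟫_ℂ ≠ 0) :
    1 - ⟪ballInvolution a z, ballInvolution a w⟫_ℂ =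
      (1 - (‖a‖ : ℂ) ^ 2) * (1 - ⟪z, w⟫_ℂ) / ((1 - ⟪z, a⟫_ℂ) * (1 - ⟪a, w⟫_ℂ)) := by
  have hs_one := one_add_ofReal_sqrt_ne_zero (1 - ‖a‖ ^ 2)
  simp only [ballInvolution, inner_smul_left, inner_smul_right, inner_sub_left, inner_sub_right,
    map_inv₀, map_sub, map_one, map_div₀, map_add, Complex.conj_ofReal, inner_conj_symm,
    inner_self_eq_one_sub_ofReal_sqrt_sq ha, ← ofReal_sqrt_one_sub_norm_sq_sq ha]
  generalize (√(1 - ‖a‖ ^ 2) : ℂ) = s at *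
  field_simp
  ring

theorem norm_one_sub_inner_ballInvolution (ha : ‖a‖ < 1) (hz : ‖z‖ < 1) (hw : ‖w‖ < 1) :
    ‖1 - ⟪ballInvolution a z, ballInvolution a w⟫_ℂ‖ =
      (1 - ‖a‖ ^ 2) * ‖1 - ⟪z, w⟫_ℂ‖ / (‖1 - ⟪a, z⟫_ℂ‖ * ‖1 - ⟪a, w⟫_ℂ‖) := by
  rw [one_sub_inner_ballInvolution ha.le (norm_pos_iff.1 (norm_one_sub_inner_pos hz ha.le))
    (norm_pos_iff.1 (norm_one_sub_inner_pos ha hw.le)), norm_div, norm_mul, norm_mul,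
    norm_one_sub_ofReal_norm_sq ha.le, norm_one_sub_inner_comm z a]

theorem one_sub_norm_ballInvolution_sq (ha : ‖a‖ ≤ 1) (haz : 1 - ⟪a, z⟫_ℂ ≠ 0) :
    1 - ‖ballInvolution a z‖ ^ 2 =
      (1 - ‖a‖ ^ 2) * (1 - ‖z‖ ^ 2) / ‖1 - ⟪a, z⟫_ℂ‖ ^ 2 := by
  have hconj : 1 - ⟪z, a⟫_ℂ = starRingEnd ℂ (1 - ⟪a, z⟫_ℂ) := by
    rw [map_sub, map_one, inner_conj_symm]
  have hself (u : E) : ⟪u, u⟫_ℂ = (‖u‖ : ℂ) ^ 2 := inner_self_eq_norm_sq_to_K u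
  have h := one_sub_inner_ballInvolution ha (hconj ▸ (map_ne_zero _).2 haz) haz
  rw [hconj, Complex.conj_mul', hself, hself] at h
  exact_mod_cast h

theorem one_sub_norm_ballInvolution_sq_of_norm_lt_one (ha : ‖a‖ < 1) (hz : ‖z‖ < 1) :
    1 - ‖ballInvolution a z‖ ^ 2 =
      (1 - ‖a‖ ^ 2) * (1 - ‖z‖ ^ 2) / ‖1 - ⟪a, z⟫_ℂ‖ ^ 2 :=
  one_sub_norm_ballInvolution_sq ha.le (norm_pos_iff.1 (norm_one_sub_inner_pos ha hz.le))

theorem norm_ballInvolution_lt_one (ha : ‖a‖ < 1) (hz : ‖z‖ < 1) : ‖ballInvolution a z‖ < 1 := by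
  have hpos : 0 < 1 - ‖ballInvolution a z‖ ^ 2 := by
    rw [one_sub_norm_ballInvolution_sq_of_norm_lt_one ha hz]
    have := one_sub_norm_sq_pos ha
    have := one_sub_norm_sq_pos hz
    have := norm_one_sub_inner_pos ha hz.le
    positivity
  exact (sq_lt_one_iff₀ (norm_nonneg _)).1 (sub_pos.1 hpos)

theorem norm_ballInvolution_ballInvolution (ha : ‖a‖ < 1) (hz : ‖z‖ < 1) (hw : ‖w‖ < 1) :
    ‖ballInvolution (ballInvolution a z) (ballInvolution a w)‖ = ‖ballInvolution z w‖ := by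
  have hz' := norm_ballInvolution_lt_one ha hz
  have hw' := norm_ballInvolution_lt_one ha hw
  have := (one_sub_norm_sq_pos ha).ne'
  have := (norm_one_sub_inner_pos ha hz.le).ne'
  have := (norm_one_sub_inner_pos ha hw.le).ne'
  have := (norm_one_sub_inner_pos hz hw.le).ne'
  have hsq : 1 - ‖ballInvolution (ballInvolution a z) (ballInvolution a w)‖ ^ 2 =
      1 - ‖ballInvolution z w‖ ^ 2 := by
    rw [one_sub_norm_ballInvolution_sq_of_norm_lt_one hz' hw',
      one_sub_norm_ballInvolution_sq_of_norm_lt_one hz hw,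
      norm_one_sub_inner_ballInvolution ha hz hw,
      one_sub_norm_ballInvolution_sq_of_norm_lt_one ha hz,
      one_sub_norm_ballInvolution_sq_of_norm_lt_one ha hw]
    field_simp
  exact (sq_eq_sq₀ (norm_nonneg _) (norm_nonneg _)).1 (sub_right_injective hsq)

theorem norm_ballInvolution_le_add_norm (ha : ‖a‖ < 1) (hz : ‖z‖ < 1) :
    ‖ballInvolution a z‖ ≤ ‖a‖ + ‖z‖ := by
  have ha_pos := one_sub_norm_sq_pos ha
  have hz_pos := one_sub_norm_sq_pos hz
  have hinner : ‖1 - ⟪a, z⟫_ℂ‖ ≤ 1 + ‖a‖ * ‖z‖ := by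
    simpa using (norm_sub_le 1 ⟪a, z⟫_ℂ).trans (add_le_add_right (norm_inner_le_norm a z) _)
  have hsum : (1 - ‖a‖ ^ 2) * (1 - ‖z‖ ^ 2) = (1 + ‖a‖ * ‖z‖) ^ 2 - (‖a‖ + ‖z‖) ^ 2 := by ring
  have hone : 1 ≤ 1 + ‖a‖ * ‖z‖ := le_add_of_nonneg_right (by positivity)
  refine le_of_sq_le_sq (sub_le_sub_iff_left 1 |>.1 ?_) (by positivity)
  calc 1 - (‖a‖ + ‖z‖) ^ 2
      ≤ 1 - (‖a‖ + ‖z‖) ^ 2 / (1 + ‖a‖ * ‖z‖) ^ 2 := by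
        gcongr
        exact div_le_self (sq_nonneg _) (one_le_pow₀ hone)
    _ = (1 - ‖a‖ ^ 2) * (1 - ‖z‖ ^ 2) / (1 + ‖a‖ * ‖z‖) ^ 2 := by
        rw [hsum, sub_div, div_self (by positivity)]
    _ ≤ (1 - ‖a‖ ^ 2) * (1 - ‖z‖ ^ 2) / ‖1 - ⟪a, z⟫_ℂ‖ ^ 2 := by
        have := norm_one_sub_inner_pos ha hz.le
        gcongr
    _ = 1 - ‖ballInvolution a z‖ ^ 2 :=
        (one_sub_norm_ballInvolution_sq_of_norm_lt_one ha hz).symm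

theorem norm_ballInvolution_comm (hz : ‖z‖ < 1) (hw : ‖w‖ < 1) :
    ‖ballInvolution z w‖ = ‖ballInvolution w z‖ := by
  have hsq : 1 - ‖ballInvolution z w‖ ^ 2 = 1 - ‖ballInvolution w z‖ ^ 2 := by
    rw [one_sub_norm_ballInvolution_sq_of_norm_lt_one hz hw,
      one_sub_norm_ballInvolution_sq_of_norm_lt_one hw hz, norm_one_sub_inner_comm,
      mul_comm (1 - ‖z‖ ^ 2)]
  exact (sq_eq_sq₀ (norm_nonneg _) (norm_nonneg _)).1 (sub_right_injective hsq)

theorem norm_ballInvolution_le_add_norm_ballInvolution (ha : ‖a‖ < 1) (hz : ‖z‖ < 1)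
    (hw : ‖w‖ < 1) :
    ‖ballInvolution z w‖ ≤ ‖ballInvolution z a‖ + ‖ballInvolution w a‖ := by
  rw [← norm_ballInvolution_ballInvolution ha hz hw, norm_ballInvolution_comm hz ha,
    norm_ballInvolution_comm hw ha]
  exact norm_ballInvolution_le_add_norm (norm_ballInvolution_lt_one ha hz)
    (norm_ballInvolution_lt_one ha hw)

/-- The Bergman metric `β(z, w) = artanh ‖φ_z w‖` of the unit ball. -/
def bergmanDist (z w : E) : ℝ :=
  Real.artanh ‖ballInvolution z w‖

theorem lt_bergmanDist_iff {δ : ℝ} (hz : ‖z‖ < 1) (hw : ‖w‖ < 1) :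
    δ < bergmanDist z w ↔ Real.tanh δ < ‖ballInvolution z w‖ := by
  have hmem : ‖ballInvolution z w‖ ∈ Set.Ioo (-1) 1 :=
    ⟨neg_one_lt_zero.trans_le (norm_nonneg _), norm_ballInvolution_lt_one hz hw⟩
  rw [← Real.artanh_lt_artanh_iff ⟨Real.neg_one_lt_tanh δ, Real.tanh_lt_one δ⟩ hmem,
    Real.artanh_tanh, bergmanDist]

/-- A family in the unit ball which is `δ`-separated for the Bergman metric. -/
structure IsBergmanSeparated {ι : Type*} (δ : ℝ) (w : ι → E) : Prop where
  norm_lt_one : ∀ i, ‖w i‖ < 1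
  lt_bergmanDist : Pairwise fun i j => δ < bergmanDist (w i) (w j)

theorem IsBergmanSeparated.ballInvolution_comp {ι : Type*} {δ : ℝ} {w : ι → E}
    (hw : IsBergmanSeparated δ w) (ha : ‖a‖ < 1) :
    IsBergmanSeparated δ fun i => ballInvolution a (w i) where
  norm_lt_one i := norm_ballInvolution_lt_one ha (hw.norm_lt_one i)
  lt_bergmanDist i j hij := by
    simpa only [bergmanDist, norm_ballInvolution_ballInvolution ha (hw.norm_lt_one i)
      (hw.norm_lt_one j)] using hw.lt_bergmanDist hij

/-- The linear map multiplying by `1 - ‖a‖²` on the line `ℂ a` and by `√(1 - ‖a‖²)` on its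
orthogonal complement, i.e. `-dφ_a(0)`. It carries Euclidean balls to ellipsoids whose translates
by `a` are comparable to Bergman balls. -/
def ballScaling (a : E) : E →ₗ[ℂ] E :=
  (√(1 - ‖a‖ ^ 2) : ℂ) • LinearMap.transvection (innerSL ℂ a) (-(1 + √(1 - ‖a‖ ^ 2) : ℂ)⁻¹ • a)

theorem ballScaling_apply (a y : E) :
    ballScaling a y =
      (√(1 - ‖a‖ ^ 2) : ℂ) • (y - (⟪a, y⟫_ℂ / (1 + √(1 - ‖a‖ ^ 2))) • a) := by
  simp only [ballScaling, LinearMap.smul_apply, LinearMap.transvection.apply,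
    ContinuousLinearMap.coe_coe, innerSL_apply_apply, smul_smul, neg_smul, smul_neg,
    div_eq_mul_inv, sub_eq_add_neg]

theorem inner_ballScaling (ha : ‖a‖ ≤ 1) (y : E) :
    ⟪a, ballScaling a y⟫_ℂ = (1 - (‖a‖ : ℂ) ^ 2) * ⟪a, y⟫_ℂ := by
  have hs_one := one_add_ofReal_sqrt_ne_zero (1 - ‖a‖ ^ 2)
  rw [ballScaling_apply, inner_smul_right, inner_sub_right, inner_smul_right,
    inner_self_eq_one_sub_ofReal_sqrt_sq ha, ← ofReal_sqrt_one_sub_norm_sq_sq ha]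
  field_simp
  ring

theorem one_sub_inner_add_ballScaling (ha : ‖a‖ ≤ 1) (y : E) :
    1 - ⟪a, a + ballScaling a y⟫_ℂ = (1 - (‖a‖ : ℂ) ^ 2) * (1 - ⟪a, y⟫_ℂ) := by
  rw [inner_add_right, inner_ballScaling ha, inner_self_eq_one_sub_ofReal_sqrt_sq ha,
    ← ofReal_sqrt_one_sub_norm_sq_sq ha]
  ring

theorem ballInvolution_add_ballScaling (ha : ‖a‖ < 1) (y : E) :
    ballInvolution a (a + ballScaling a y) = -(1 - ⟪a, y⟫_ℂ)⁻¹ • y := by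
  have hs := ofReal_sqrt_one_sub_norm_sq_sq ha.le
  have hs_one := one_add_ofReal_sqrt_ne_zero (1 - ‖a‖ ^ 2)
  have hne : (1 - (‖a‖ : ℂ) ^ 2) ≠ 0 := by exact_mod_cast (one_sub_norm_sq_pos ha).ne'
  have hinner : ⟪a, a + ballScaling a y⟫_ℂ =
      1 - (√(1 - ‖a‖ ^ 2) : ℂ) ^ 2 * (1 - ⟪a, y⟫_ℂ) := by
    rw [hs, ← one_sub_inner_add_ballScaling ha.le y, sub_sub_cancel]
  have hs_ne_zero : (√(1 - ‖a‖ ^ 2) : ℂ) ≠ 0 := (pow_ne_zero_iff two_ne_zero).1 (hs ▸ hne)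
  rw [ballInvolution, hinner, ballScaling_apply, sub_sub_cancel, mul_inv]
  generalize (√(1 - ‖a‖ ^ 2) : ℂ) = s at *
  generalize (1 - ⟪a, y⟫_ℂ)⁻¹ = q
  match_scalars
  · field_simp
    ring
  · field_simp

theorem one_sub_norm_add_ballScaling_sq (ha : ‖a‖ < 1) {y : E} (hy : ‖y‖ < 1) :
    1 - ‖a + ballScaling a y‖ ^ 2 = (1 - ‖a‖ ^ 2) * (‖1 - ⟪a, y⟫_ℂ‖ ^ 2 - ‖y‖ ^ 2) := by
  have hpos := one_sub_norm_sq_pos ha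
  have hy_pos := norm_one_sub_inner_pos ha hy.le
  have hnorm : ‖1 - ⟪a, a + ballScaling a y⟫_ℂ‖ = (1 - ‖a‖ ^ 2) * ‖1 - ⟪a, y⟫_ℂ‖ := by
    rw [one_sub_inner_add_ballScaling ha.le, norm_mul, norm_one_sub_ofReal_norm_sq ha.le]
  have h := one_sub_norm_ballInvolution_sq (z := a + ballScaling a y) ha.le
    (norm_pos_iff.1 (hnorm ▸ by positivity))
  rw [ballInvolution_add_ballScaling ha, hnorm, norm_smul, norm_neg, norm_inv] at h
  field_simp at h
  linarith

theorem det_ballScaling [FiniteDimensional ℂ E] (ha : ‖a‖ ≤ 1) :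
    LinearMap.det (ballScaling a) = (√(1 - ‖a‖ ^ 2) : ℂ) ^ (Module.finrank ℂ E + 1) := by
  have hs_one := one_add_ofReal_sqrt_ne_zero (1 - ‖a‖ ^ 2)
  have htransvection : 1 + ⟪a, -(1 + √(1 - ‖a‖ ^ 2) : ℂ)⁻¹ • a⟫_ℂ = √(1 - ‖a‖ ^ 2) := by
    rw [inner_smul_right, inner_self_eq_one_sub_ofReal_sqrt_sq ha]
    field_simp
    ring
  rw [ballScaling, LinearMap.det_smul, LinearMap.transvection.det]
  simp only [ContinuousLinearMap.coe_coe, innerSL_apply_apply, htransvection]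
  exact (pow_succ _ _).symm

/-- The ellipsoid `a + S (closedBall 0 c)` with `S = ballScaling a`, a substitute for the Bergman
ball centred at `a` which is an affine image of a Euclidean ball. -/
def bergmanEllipsoid (a : E) (c : ℝ) : Set E :=
  (fun y => a + ballScaling a y) '' Metric.closedBall 0 c

theorem one_sub_norm_sq_div_mem_Icc_of_mem_bergmanEllipsoid (ha : ‖a‖ < 1) {c : ℝ}
    (hc : c ≤ 1 / 4) {x : E} (hx : x ∈ bergmanEllipsoid a c) :
    (1 - ‖x‖ ^ 2) / (1 - ‖a‖ ^ 2) ∈ Set.Icc 2⁻¹ 2 := by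
  obtain ⟨y, hy, rfl⟩ := hx
  have hyc : ‖y‖ ≤ 1 / 4 := (mem_closedBall_zero_iff.1 hy).trans hc
  have hinner : ‖⟪a, y⟫_ℂ‖ ≤ 1 / 4 := by
    nlinarith [norm_inner_le_norm (𝕜 := ℂ) a y, norm_nonneg y, norm_nonneg a]
  have hlower := norm_sub_norm_le (1 : ℂ) ⟪a, y⟫_ℂ
  have hupper := norm_sub_le (1 : ℂ) ⟪a, y⟫_ℂ
  rw [norm_one] at hlower hupper
  rw [one_sub_norm_add_ballScaling_sq ha (by linarith),
    mul_div_cancel_left₀ _ (one_sub_norm_sq_pos ha).ne']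
  constructor <;> nlinarith [norm_nonneg y]

theorem norm_lt_one_of_mem_bergmanEllipsoid (ha : ‖a‖ < 1) {c : ℝ} (hc : c ≤ 1 / 4) {x : E}
    (hx : x ∈ bergmanEllipsoid a c) : ‖x‖ < 1 := by
  have hratio := (one_sub_norm_sq_div_mem_Icc_of_mem_bergmanEllipsoid ha hc hx).1
  have hpos := one_sub_norm_sq_pos ha
  rw [le_div_iff₀ hpos] at hratio
  exact (sq_lt_one_iff₀ (norm_nonneg x)).1 (by linarith)

theorem norm_ballInvolution_le_of_mem_bergmanEllipsoid (ha : ‖a‖ < 1) {c : ℝ} (hc : c ≤ 1 / 2)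
    {x : E} (hx : x ∈ bergmanEllipsoid a c) : ‖ballInvolution a x‖ ≤ 2 * c := by
  obtain ⟨y, hy, rfl⟩ := hx
  have hyc : ‖y‖ ≤ c := mem_closedBall_zero_iff.1 hy
  have hinner : ‖⟪a, y⟫_ℂ‖ ≤ 1 / 2 := by
    nlinarith [norm_inner_le_norm (𝕜 := ℂ) a y, norm_nonneg y, norm_nonneg a]
  have hlower := norm_sub_norm_le (1 : ℂ) ⟪a, y⟫_ℂ
  rw [norm_one] at hlower
  rw [ballInvolution_add_ballScaling ha, norm_smul, norm_neg, norm_inv, inv_mul_le_iff₀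
    (by linarith)]
  nlinarith [norm_nonneg y]

theorem disjoint_bergmanEllipsoid {c : ℝ} (hc : c ≤ 1 / 4) (hz : ‖z‖ < 1) (hw : ‖w‖ < 1)
    (hzw : 4 * c < ‖ballInvolution z w‖) :
    Disjoint (bergmanEllipsoid z c) (bergmanEllipsoid w c) := by
  refine Set.disjoint_left.2 fun x hxz hxw => hzw.not_ge ?_
  have htriangle := norm_ballInvolution_le_add_norm_ballInvolution
    (norm_lt_one_of_mem_bergmanEllipsoid hz hc hxz) hz hw
  have hz_le := norm_ballInvolution_le_of_mem_bergmanEllipsoid hz (by linarith) hxz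
  have hw_le := norm_ballInvolution_le_of_mem_bergmanEllipsoid hw (by linarith) hxw
  linarith

theorem isCompact_bergmanEllipsoid [FiniteDimensional ℂ E] (a : E) (c : ℝ) :
    IsCompact (bergmanEllipsoid a c) :=
  have : ProperSpace E := FiniteDimensional.proper ℂ E
  (isCompact_closedBall 0 c).image
    (continuous_const.add (ballScaling a).continuous_of_finiteDimensional)

end UnitBall

section SeparatedSums

variable {E : Type*} [NormedAddCommGroup E] [InnerProductSpace ℂ E] [FiniteDimensional ℂ E]

theorem measureReal_bergmanEllipsoid [MeasurableSpace E] [BorelSpace E] (μ : Measure E)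
    [μ.IsAddHaarMeasure] {a : E} (ha : ‖a‖ ≤ 1) (c : ℝ) :
    μ.real (bergmanEllipsoid a c) =
      (1 - ‖a‖ ^ 2) ^ (Module.finrank ℂ E + 1) * μ.real (Metric.closedBall 0 c) := by
  have htranslate : μ.real (bergmanEllipsoid a c) =
      μ.real (ballScaling a '' Metric.closedBall 0 c) := by
    rw [bergmanEllipsoid, ← Set.image_image (fun y => a + y), Set.image_add_left,
      measureReal_def, measure_preimage_add, measureReal_def]
  rw [htranslate, addHaar_real_image_complexLinearMap, det_ballScaling ha, norm_pow,
    Complex.norm_real, Real.norm_of_nonneg (Real.sqrt_nonneg _), pow_right_comm,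
    Real.sq_sqrt (one_sub_norm_sq_nonneg ha)]

theorem mul_sum_one_sub_norm_sq_rpow_le_setIntegral [MeasurableSpace E] [BorelSpace E]
    (μ : Measure E) [μ.IsAddHaarMeasure] {p : ℝ} (hp : -1 < p) {c : ℝ} (hc : c ≤ 1 / 4)
    {ι : Type*} (F : Finset ι) {w : ι → E} (hw : ∀ i ∈ F, ‖w i‖ < 1)
    (hdisj : (F : Set ι).PairwiseDisjoint fun i => bergmanEllipsoid (w i) c) :
    2 ^ (-|p|) * μ.real (Metric.closedBall 0 c) *
        ∑ i ∈ F, (1 - ‖w i‖ ^ 2) ^ (p + (Module.finrank ℂ E + 1)) ≤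
      ∫ x in Metric.ball 0 1, (1 - ‖x‖ ^ 2) ^ p ∂μ := by
  have hlower (i) (hi : i ∈ F) (x) (hx : x ∈ bergmanEllipsoid (w i) c) :
      2 ^ (-|p|) * (1 - ‖w i‖ ^ 2) ^ p ≤ (1 - ‖x‖ ^ 2) ^ p := by
    have hwi := one_sub_norm_sq_pos (hw i hi)
    have hxi := one_sub_norm_sq_pos (norm_lt_one_of_mem_bergmanEllipsoid (hw i hi) hc hx)
    have hratio := rpow_neg_abs_le_rpow two_pos
      (one_sub_norm_sq_div_mem_Icc_of_mem_bergmanEllipsoid (hw i hi) hc hx) p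
    rwa [Real.div_rpow hxi.le hwi.le, le_div_iff₀ (by positivity)] at hratio
  calc _ = ∑ i ∈ F, 2 ^ (-|p|) * (1 - ‖w i‖ ^ 2) ^ p * μ.real (bergmanEllipsoid (w i) c) := by
        rw [Finset.mul_sum]
        refine Finset.sum_congr rfl fun i hi => ?_
        rw [measureReal_bergmanEllipsoid μ (hw i hi).le,
          Real.rpow_add (one_sub_norm_sq_pos (hw i hi)),
          Real.rpow_add_one (one_sub_norm_sq_pos (hw i hi)).ne', Real.rpow_natCast]
        ring
    _ ≤ _ := sum_mul_measureReal_le_setIntegral F measurableSet_ball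
        (integrableOn_one_sub_norm_sq_rpow μ hp)
        (fun x hx => Real.rpow_nonneg (one_sub_norm_sq_pos (mem_ball_zero_iff.1 hx)).le p)
        (fun i _ => (isCompact_bergmanEllipsoid (w i) c).measurableSet)
        (fun i _ => (isCompact_bergmanEllipsoid (w i) c).measure_ne_top)
        (fun i hi x hx =>
          mem_ball_zero_iff.2 (norm_lt_one_of_mem_bergmanEllipsoid (hw i hi) hc hx))
        hdisj hlower

variable (E) in
theorem exists_sum_one_sub_norm_sq_rpow_le {δ t : ℝ} (hδ : 0 < δ) (ht : Module.finrank ℂ E < t) :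
    ∃ C : ℝ, 0 ≤ C ∧ ∀ {ι : Type*} (F : Finset ι) (w : ι → E), IsBergmanSeparated δ w →
      ∑ i ∈ F, (1 - ‖w i‖ ^ 2) ^ t ≤ C := by
  borelize E
  let μ : Measure E := Measure.addHaar
  obtain ⟨p, rfl⟩ : ∃ p, t = p + (Module.finrank ℂ E + 1) :=
    ⟨t - (Module.finrank ℂ E + 1), (sub_add_cancel _ _).symm⟩
  have hp : -1 < p := by linarith
  obtain ⟨c, hc_pos, hc_le, hcδ⟩ : ∃ c, 0 < c ∧ c ≤ 1 / 4 ∧ 4 * c = Real.tanh δ := by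
    have htanh : 0 < Real.tanh δ := by
      rw [Real.tanh_eq_sinh_div_cosh]
      exact div_pos (Real.sinh_pos_iff.2 hδ) (Real.cosh_pos δ)
    exact ⟨Real.tanh δ / 4, by linarith, by linarith [Real.tanh_lt_one δ], by ring⟩
  have hball : 0 < μ.real (Metric.closedBall (0 : E) c) :=
    ENNReal.toReal_pos (Metric.measure_closedBall_pos μ 0 hc_pos).ne'
      measure_closedBall_lt_top.ne
  have hκ : 0 < 2 ^ (-|p|) * μ.real (Metric.closedBall (0 : E) c) := by positivity
  refine ⟨(∫ x in Metric.ball 0 1, (1 - ‖x‖ ^ 2) ^ p ∂μ) / _,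
    div_nonneg (setIntegral_nonneg measurableSet_ball fun x hx =>
      Real.rpow_nonneg (one_sub_norm_sq_pos (mem_ball_zero_iff.1 hx)).le p) hκ.le,
    fun F w hw => (le_div_iff₀' hκ).2 ?_⟩
  refine mul_sum_one_sub_norm_sq_rpow_le_setIntegral μ hp hc_le F (fun i _ => hw.norm_lt_one i)
    fun i _ j _ hij => disjoint_bergmanEllipsoid hc_le (hw.norm_lt_one i) (hw.norm_lt_one j) ?_
  rw [hcδ]
  exact (lt_bergmanDist_iff (hw.norm_lt_one i) (hw.norm_lt_one j)).1 (hw.lt_bergmanDist hij)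

end SeparatedSums

section TentSums

variable {E : Type*} [NormedAddCommGroup E] [InnerProductSpace ℂ E] {z : E}

theorem exists_forall_norm_one_sub_inner_sq_le (hz : ‖z‖ < 1) {R : ℝ} (hR : 0 < R) :
    ∃ a : E, ‖a‖ < 1 ∧ ∀ w : E, ‖w‖ < 1 → ‖1 - ⟪z, w⟫_ℂ‖ ≤ R →
      ‖1 - ⟪a, w⟫_ℂ‖ ^ 2 ≤ 4 * R * (1 - ‖a‖ ^ 2) := by
  rcases le_total 1 R with hR_one | hR_one
  · exact ⟨0, by simp, fun w _ _ => by simpa using (by linarith : 1 ≤ 4 * R)⟩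
  have hnorm : ‖((1 - R : ℝ) : ℂ) • z‖ ≤ 1 - R := by
    rw [norm_smul, Complex.norm_real, Real.norm_of_nonneg (sub_nonneg.2 hR_one)]
    exact mul_le_of_le_one_right (sub_nonneg.2 hR_one) hz.le
  refine ⟨((1 - R : ℝ) : ℂ) • z, by linarith, fun w hw hzw => ?_⟩
  have hinner : ‖⟪z, w⟫_ℂ‖ ≤ 1 :=
    (norm_inner_le_norm z w).trans (mul_le_one₀ hz.le (norm_nonneg w) hw.le)
  have hsplit : 1 - ⟪((1 - R : ℝ) : ℂ) • z, w⟫_ℂ = (1 - ⟪z, w⟫_ℂ) + R * ⟪z, w⟫_ℂ := by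
    rw [inner_smul_left, Complex.conj_ofReal]
    push_cast
    ring
  have hupper : ‖1 - ⟪((1 - R : ℝ) : ℂ) • z, w⟫_ℂ‖ ≤ 2 * R := by
    rw [hsplit]
    refine (norm_add_le _ _).trans ?_
    rw [norm_mul, Complex.norm_real, Real.norm_of_nonneg hR.le]
    nlinarith
  have hlower : R ≤ 1 - ‖((1 - R : ℝ) : ℂ) • z‖ ^ 2 := by
    nlinarith [norm_nonneg (((1 - R : ℝ) : ℂ) • z)]
  calc ‖1 - ⟪((1 - R : ℝ) : ℂ) • z, w⟫_ℂ‖ ^ 2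
      ≤ (2 * R) ^ 2 := by gcongr
    _ = 4 * R * R := by ring
    _ ≤ 4 * R * (1 - ‖((1 - R : ℝ) : ℂ) • z‖ ^ 2) := by gcongr

theorem exists_forall_one_sub_norm_sq_le_mul (hz : ‖z‖ < 1) {R : ℝ} (hR : 0 < R) :
    ∃ a : E, ‖a‖ < 1 ∧ ∀ w : E, ‖w‖ < 1 → ‖1 - ⟪z, w⟫_ℂ‖ ≤ R →
      1 - ‖w‖ ^ 2 ≤ 4 * R * (1 - ‖ballInvolution a w‖ ^ 2) := by
  obtain ⟨a, ha, hle⟩ := exists_forall_norm_one_sub_inner_sq_le hz hR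
  refine ⟨a, ha, fun w hw hzw => ?_⟩
  have hw_pos := one_sub_norm_sq_pos hw
  have haw := norm_one_sub_inner_pos ha hw.le
  rw [one_sub_norm_ballInvolution_sq_of_norm_lt_one ha hw, ← mul_div_assoc,
    le_div_iff₀ (by positivity), ← mul_assoc, mul_comm]
  exact mul_le_mul_of_nonneg_right (hle w hw hzw) hw_pos.le

variable [FiniteDimensional ℂ E]

variable (E) in
theorem exists_sum_rpow_div_rpow_le_of_mem_Icc {δ t s : ℝ} (hδ : 0 < δ)
    (ht : Module.finrank ℂ E < t) (hs : 0 ≤ s) :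
    ∃ C : ℝ, 0 ≤ C ∧ ∀ {ι : Type*} (F : Finset ι) (w : ι → E), IsBergmanSeparated δ w →
      ∀ z : E, ‖z‖ < 1 → ∀ R > 0, (∀ i ∈ F, ‖1 - ⟪z, w i⟫_ℂ‖ ∈ Set.Icc (R / 2) R) →
        ∑ i ∈ F, (1 - ‖w i‖ ^ 2) ^ t / ‖1 - ⟪z, w i⟫_ℂ‖ ^ s ≤ C * R ^ (t - s) := by
  obtain ⟨C, hC, hsum⟩ := exists_sum_one_sub_norm_sq_rpow_le E hδ ht
  have ht_nonneg : 0 ≤ t := (Nat.cast_nonneg _).trans ht.le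
  refine ⟨4 ^ t * 2 ^ s * C, by positivity, fun F w hw z hz R hR hshell => ?_⟩
  obtain ⟨a, ha, hle⟩ := exists_forall_one_sub_norm_sq_le_mul hz hR
  have hterm (i) (hi : i ∈ F) : (1 - ‖w i‖ ^ 2) ^ t / ‖1 - ⟪z, w i⟫_ℂ‖ ^ s ≤
      (4 * R) ^ t / (R / 2) ^ s * (1 - ‖ballInvolution a (w i)‖ ^ 2) ^ t := by
    have hwi := one_sub_norm_sq_pos (hw.norm_lt_one i)
    have himage := one_sub_norm_sq_pos (norm_ballInvolution_lt_one ha (hw.norm_lt_one i))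
    rw [div_mul_eq_mul_div, ← Real.mul_rpow (by positivity) himage.le]
    have := hle (w i) (hw.norm_lt_one i) (hshell i hi).2
    have := (hshell i hi).1
    gcongr
  calc ∑ i ∈ F, (1 - ‖w i‖ ^ 2) ^ t / ‖1 - ⟪z, w i⟫_ℂ‖ ^ s
      ≤ (4 * R) ^ t / (R / 2) ^ s * ∑ i ∈ F, (1 - ‖ballInvolution a (w i)‖ ^ 2) ^ t := by
        rw [Finset.mul_sum]
        exact Finset.sum_le_sum hterm
    _ ≤ (4 * R) ^ t / (R / 2) ^ s * C := by
        gcongr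
        exact hsum F _ (hw.ballInvolution_comp ha)
    _ = 4 ^ t * 2 ^ s * C * R ^ (t - s) := by
        rw [Real.mul_rpow (by norm_num) hR.le, Real.div_rpow hR.le (by norm_num),
          Real.rpow_sub hR]
        field_simp

variable (E) in
theorem exists_sum_rpow_div_rpow_le {δ t s : ℝ} (hδ : 0 < δ) (ht : Module.finrank ℂ E < t)
    (hts : t < s) :
    ∃ C : ℝ, 0 ≤ C ∧ ∀ {ι : Type*} (F : Finset ι) (w : ι → E), IsBergmanSeparated δ w →
      ∀ z : E, ‖z‖ < 1 →
        ∑ i ∈ F, (1 - ‖w i‖ ^ 2) ^ t / ‖1 - ⟪z, w i⟫_ℂ‖ ^ s ≤ C * (1 - ‖z‖ ^ 2) ^ (t - s) := by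
  have hs : 0 ≤ s := (Nat.cast_nonneg _).trans (ht.trans hts).le
  obtain ⟨C, hC, hshell⟩ := exists_sum_rpow_div_rpow_le_of_mem_Icc E hδ ht hs
  have hq : (2 : ℝ) ^ (t - s) < 1 :=
    Real.rpow_lt_one_of_one_lt_of_neg one_lt_two (sub_neg.2 hts)
  refine ⟨C * (1 - (2 : ℝ) ^ (t - s))⁻¹, mul_nonneg hC (inv_nonneg.2 (sub_pos.2 hq).le),
    fun F w hw z hz => ?_⟩
  have hz_pos := one_sub_norm_sq_pos hz
  have hone_le (i) : 1 ≤ ‖1 - ⟪z, w i⟫_ℂ‖ / ((1 - ‖z‖ ^ 2) / 2) :=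
    (one_le_div (half_pos hz_pos)).2 <|
      half_one_sub_norm_sq_le_norm_one_sub_inner hz.le (hw.norm_lt_one i).le
  choose j hj_le hj_lt using fun i => exists_nat_pow_near (hone_le i) one_lt_two
  rw [mul_right_comm]
  refine sum_le_of_fiber_le_geometric F _ j (by positivity) (by positivity) hq fun l => ?_
  have hmem (i) (hi : i ∈ F.filter (j · = l)) : ‖1 - ⟪z, w i⟫_ℂ‖ ∈
      Set.Icc (2 ^ l * (1 - ‖z‖ ^ 2) / 2) (2 ^ l * (1 - ‖z‖ ^ 2)) := by
    obtain rfl := (Finset.mem_filter.1 hi).2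
    have hlower := hj_le i
    have hupper := hj_lt i
    rw [le_div_iff₀ (half_pos hz_pos)] at hlower
    rw [div_lt_iff₀ (half_pos hz_pos), pow_succ] at hupper
    constructor <;> linarith
  calc _ ≤ C * (2 ^ l * (1 - ‖z‖ ^ 2)) ^ (t - s) := hshell _ w hw z hz _ (by positivity) hmem
    _ = C * (1 - ‖z‖ ^ 2) ^ (t - s) * ((2 : ℝ) ^ (t - s)) ^ l := by
        rw [Real.mul_rpow (by positivity) hz_pos.le, Real.rpow_pow_comm zero_le_two]
        ring

variable (E) in
theorem stmt6_general {δ t s : ℝ} (hδ : 0 < δ) (ht : Module.finrank ℂ E < t) (hts : t < s) :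
    ∃ C > 0, ∀ {ι : Type*} (w : ι → E), IsBergmanSeparated δ w → ∀ z : E, ‖z‖ < 1 →
      Summable (fun i => (1 - ‖w i‖ ^ 2) ^ t / ‖1 - ⟪w i, z⟫_ℂ‖ ^ s) ∧
      ∑' i, (1 - ‖w i‖ ^ 2) ^ t / ‖1 - ⟪w i, z⟫_ℂ‖ ^ s ≤ C * (1 - ‖z‖ ^ 2) ^ (t - s) := by
  obtain ⟨C, hC, hsum⟩ := exists_sum_rpow_div_rpow_le E hδ ht hts
  refine ⟨C + 1, by positivity, fun w hw z hz => ?_⟩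
  have hz_pos := one_sub_norm_sq_pos hz
  have hnonneg (i) : 0 ≤ (1 - ‖w i‖ ^ 2) ^ t / ‖1 - ⟪w i, z⟫_ℂ‖ ^ s := by
    have := one_sub_norm_sq_pos (hw.norm_lt_one i)
    positivity
  have hbound (F) : ∑ i ∈ F, (1 - ‖w i‖ ^ 2) ^ t / ‖1 - ⟪w i, z⟫_ℂ‖ ^ s ≤
      (C + 1) * (1 - ‖z‖ ^ 2) ^ (t - s) := by
    simp only [norm_one_sub_inner_comm _ z]
    refine (hsum F w hw z hz).trans ?_
    gcongr
    exact le_add_of_nonneg_right zero_le_one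
  exact ⟨summable_of_sum_le hnonneg hbound, Real.tsum_le_of_sum_le hnonneg hbound⟩

end TentSums

theorem bdot_eq_inner {n : ℕ} (z w : Cn n) : bdot z w = ⟪w, z⟫_ℂ := by
  simp [bdot, PiLp.inner_apply]

theorem rho_eq_norm_ballInvolution {n : ℕ} {z w : Cn n} (hz : z ∈ B n) (hw : w ∈ B n) :
    rho z w = ‖ballInvolution z w‖ := by
  rw [rho, mob, bdot_eq_inner, ← one_sub_norm_ballInvolution_sq_of_norm_lt_one
    (mem_ball_zero_iff.1 hz) (mem_ball_zero_iff.1 hw), sub_sub_cancel,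
    Real.sqrt_sq (norm_nonneg _)]

theorem bergDist_eq_bergmanDist {n : ℕ} {z w : Cn n} (hz : z ∈ B n) (hw : w ∈ B n) :
    bergDist z w = bergmanDist z w := by
  have hlt := norm_ballInvolution_lt_one (mem_ball_zero_iff.1 hz) (mem_ball_zero_iff.1 hw)
  rw [bergDist, rho_eq_norm_ballInvolution hz hw, bergmanDist, Real.artanh_eq_half_log]
  exact ⟨neg_one_lt_zero.le.trans (norm_nonneg _), hlt.le⟩

theorem isBergmanSeparated_of_lt_bergDist {n : ℕ} {ι : Type*} {δ : ℝ} {w : ι → Cn n}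
    (hw : ∀ i, w i ∈ B n) (hsep : ∀ i j, i ≠ j → δ < bergDist (w i) (w j)) :
    IsBergmanSeparated δ w where
  norm_lt_one i := mem_ball_zero_iff.1 (hw i)
  lt_bergmanDist i j hij := (hsep i j hij).trans_eq (bergDist_eq_bergmanDist (hw i) (hw j))

theorem stmt6 (n : ℕ) (zs : ℕ → Cn n) (hzs : ∀ k, zs k ∈ B n)
    (δ : ℝ) (hδ : 0 < δ) (hsep : ∀ i j, i ≠ j → δ < bergDist (zs i) (zs j))
    (t s : ℝ) (hnt : (n : ℝ) < t) (hts : t < s) :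
    ∃ C > 0, ∀ z ∈ B n,
      ∑' k : ℕ, (1 - ‖zs k‖ ^ 2) ^ t / ‖(1 : ℂ) - bdot z (zs k)‖ ^ s ≤
        C * (1 - ‖z‖ ^ 2) ^ (t - s) := by
  obtain ⟨C, hC, hbound⟩ := stmt6_general (Cn n) hδ (by rwa [finrank_euclideanSpace_fin]) hts
  have hzs_sep := isBergmanSeparated_of_lt_bergDist hzs hsep
  exact ⟨C, hC, fun z hz => by
    simpa only [bdot_eq_inner] using (hbound zs hzs_sep z (mem_ball_zero_iff.1 hz)).2⟩
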